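/- For every integer n ≥ 2 and every positive integer c, there exists a dimension-critical finite simple graph H such that dim(H) = n + 2 and H has more than c edges. -/

import Mathlib

/-- `G` has a unit-distance representation in `ℝ^n`: an injective map of the vertices to
points of Euclidean `n`-space with adjacent vertices at Euclidean distance exactly `1`. -/
def SimpleGraph.HasUnitDistRep {V : Type*} (G : SimpleGraph V) (n : ℕ) : Prop :=
  ∃ f : V → EuclideanSpace ℝ (Fin n),
    Function.Injective f ∧ ∀ ⦃u v⦄, G.Adj u v → Dist.dist (f u) (f v) = 1

/-- The dimension of `G`: the least `n` such that `G` has a unit-distance representation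
in `ℝ^n`. -/
noncomputable def SimpleGraph.udim {V : Type*} (G : SimpleGraph V) : ℕ :=
  sInf {n | G.HasUnitDistRep n}

/-- `G` is dimension-critical: deleting any edge strictly lowers the dimension. -/
def SimpleGraph.IsDimCritical {V : Type*} (G : SimpleGraph V) : Prop :=
  ∀ e ∈ G.edgeSet, (G.deleteEdges {e}).udim < G.udim

open Complex in
lemma dc_exists_w (n : ℕ) (hn : 2 ≤ n) : ∃ w : ℂ, w.re = 1 / (n + 1 : ℝ) ∧ w.re ^ 2 + w.im ^ 2 = 1 ∧
    w.im ≠ 0 ∧ ∀ k : ℕ, 0 < k → w ^ k ≠ 1 := by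
  have hn' : (2 : ℝ) ≤ n := by exact_mod_cast hn
  set t : ℝ := 1 / (n + 1 : ℝ) with ht
  have ht0 : 0 < t := by positivity
  have ht1 : t < 1 := by
    rw [ht, div_lt_one (by positivity)]; linarith
  have hpos : 0 < 1 - t ^ 2 := by nlinarith
  refine ⟨⟨t, Real.sqrt (1 - t ^ 2)⟩, rfl, ?_, ?_, ?_⟩
  · simp only
    rw [Real.sq_sqrt hpos.le]; ring
  · exact (Real.sqrt_pos.2 hpos).ne'
  · intro k hk hw
    set w : ℂ := ⟨t, Real.sqrt (1 - t ^ 2)⟩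
    have h1 : IsIntegral ℤ w := .of_pow hk (hw ▸ isIntegral_one)
    have hw' : (starRingEnd ℂ w) ^ k = 1 := by rw [← map_pow, hw, map_one]
    have h2 : IsIntegral ℤ (starRingEnd ℂ w) := .of_pow hk (hw' ▸ isIntegral_one)
    have h3 := h1.add h2
    rw [Complex.add_conj] at h3
    have h4 := (IsIntegral.exists_int_iff_exists_rat h3).1 ⟨2 / (n + 1), by
      push_cast [w, t]; ring⟩
    obtain ⟨z, hz⟩ := h4
    have hz' : 2 * t = z := by
      have := congrArg Complex.re hz
      simpa [w] using this
    have hz1 : (0 : ℝ) < z := by rw [← hz']; positivity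
    have hz2 : (z : ℝ) < 1 := by
      rw [← hz', ht, ← mul_div_assoc, div_lt_one (by positivity)]; linarith
    have a : 0 < z := by exact_mod_cast hz1
    have b : z < 1 := by exact_mod_cast hz2
    omega

/-- a periodic real sequence satisfying the recurrence vanishes -/
lemma dc_seq_zero (w : ℂ) (hw : w.re ^ 2 + w.im ^ 2 = 1) (him : w.im ≠ 0)
    (k : ℕ) (hk : w ^ k ≠ 1) (s : ℕ → ℝ)
    (hs : ∀ j, s (j + 2) = 2 * w.re * s (j + 1) - s j) (hp0 : s k = s 0) (hp1 : s (k + 1) = s 1) :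
    s 0 = 0 := by
  set v := starRingEnd ℂ w with hv
  have hvk : v ^ k ≠ 1 := by
    intro h
    apply hk
    have := congrArg (starRingEnd ℂ) h
    simpa [hv] using this
  have hd : ∀ j, ((s (j + 1) : ℂ) - w * s j) = v ^ j * (s 1 - w * s 0) := by
    intro j
    induction j with
    | zero => simp
    | succ j ih =>
      rw [pow_succ', mul_assoc, ← ih, hs]
      apply Complex.ext
      · simp [hv]; linear_combination (s j) * hw
      · simp [hv]; ring
  have h := hd k
  rw [hp0, hp1] at h
  have h2 : (1 - v ^ k) * ((s 1 : ℂ) - w * s 0) = 0 := by linear_combination h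
  rcases mul_eq_zero.1 h2 with h3 | h3
  · exact absurd (by linear_combination -h3) hvk
  · have := congrArg Complex.im h3
    simp at this
    tauto

/-- unit vectors with pairwise inner product `1/2` -/
lemma dc_linInd {E : Type*} [NormedAddCommGroup E] [InnerProductSpace ℝ E] (n : ℕ)
    (q : Fin n → E) (hq : ∀ i j, inner ℝ (q i) (q j) = if i = j then (1 : ℝ) else 1 / 2) :
    LinearIndependent ℝ q := by
  rw [Fintype.linearIndependent_iff]
  intro a ha
  have key : ∀ j, a j + ∑ i, a i = 0 := by
    intro j
    have h : inner ℝ (q j) (∑ i, a i • q i) = 0 := by rw [ha, inner_zero_right]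
    rw [inner_sum] at h
    simp_rw [inner_smul_right, hq] at h
    have e : ∀ i, a i * (if j = i then (1 : ℝ) else 1 / 2) = (1 / 2) * a i + (if j = i then (1/2) * a i else 0) := by
      intro i; split_ifs <;> ring
    simp_rw [e] at h
    rw [Finset.sum_add_distrib, ← Finset.mul_sum, Finset.sum_ite_eq] at h
    simp at h
    linarith
  have hS : (n + 1 : ℝ) * ∑ i, a i = 0 := by
    have : ∑ j, (a j + ∑ i, a i) = 0 := Finset.sum_eq_zero fun j _ => key j
    rw [Finset.sum_add_distrib] at this
    simp at this
    linarith
  have hS' : ∑ i, a i = 0 := by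
    rcases mul_eq_zero.1 hS with h | h
    · exact absurd h (by positivity)
    · exact h
  intro i
  have := key i
  linarith

lemma dc_inner_of_dist {E : Type*} [NormedAddCommGroup E] [InnerProductSpace ℝ E] {a b v : E}
    (h1 : dist a v = 1) (h2 : dist b v = 1) (h3 : dist a b = 1) :
    inner ℝ (a - v) (b - v) = (1 / 2 : ℝ) := by
  rw [real_inner_eq_norm_mul_self_add_norm_mul_self_sub_norm_sub_mul_self_div_two]
  rw [sub_sub_sub_cancel_right, ← dist_eq_norm, ← dist_eq_norm, ← dist_eq_norm, h1, h2, h3]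
  norm_num

lemma dc_recur {E : Type*} [NormedAddCommGroup E] [InnerProductSpace ℝ E] [FiniteDimensional ℝ E]
    (n : ℕ) (hE : Module.finrank ℝ E = n + 1)
    (p : Fin n → E) (hp : ∀ i j, i ≠ j → dist (p i) (p j) = 1) (y v z : E)
    (hyv : dist y v = 1) (hzv : dist z v = 1) (hyz : y ≠ z)
    (hy : ∀ i, dist (p i) y = 1) (hv : ∀ i, dist (p i) v = 1) (hz : ∀ i, dist (p i) z = 1) :
    (y - v) + (z - v) = (2 / (n + 1) : ℝ) • ∑ i, (p i - v) := by
  set q : Fin n → E := fun i => p i - v with hqd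
  have hq : ∀ i j, inner ℝ (q i) (q j) = if i = j then (1 : ℝ) else 1 / 2 := by
    intro i j
    split_ifs with h
    · subst h
      rw [real_inner_self_eq_norm_sq, hqd]
      simp only
      rw [← dist_eq_norm, hv]; norm_num
    · exact dc_inner_of_dist (hv i) (hv j) (hp i j h)
  have hqy : ∀ i, inner ℝ (q i) (y - v) = (1 / 2 : ℝ) := fun i =>
    dc_inner_of_dist (hv i) hyv (hy i)
  have hqz : ∀ i, inner ℝ (q i) (z - v) = (1 / 2 : ℝ) := fun i =>
    dc_inner_of_dist (hv i) hzv (hz i)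
  set u := (y - v) - (z - v) with hu
  have hu0 : u ≠ 0 := by
    rw [hu, sub_sub_sub_cancel_right]; exact sub_ne_zero.2 hyz
  have hqu : ∀ i, inner ℝ (q i) u = 0 := by
    intro i; rw [hu, inner_sub_right, hqy, hqz, sub_self]
  set x := (y - v) + (z - v) - (2 / (n + 1) : ℝ) • ∑ i, q i with hx
  have hqx : ∀ i, inner ℝ (q i) x = 0 := by
    intro i
    rw [hx, inner_sub_right, inner_add_right, hqy, hqz, inner_smul_right, inner_sum]
    simp_rw [hq]
    have e : ∀ j, (if i = j then (1 : ℝ) else 1 / 2) = 1 / 2 + (if i = j then 1 / 2 else 0) := by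
      intro j; split_ifs <;> norm_num
    simp_rw [e]
    rw [Finset.sum_add_distrib, Finset.sum_ite_eq]
    simp
    field_simp
    ring
  have hux : inner ℝ u x = 0 := by
    rw [hx, inner_sub_right, inner_smul_right, inner_sum]
    have : ∀ i, inner ℝ u (q i) = 0 := fun i => by rw [real_inner_comm]; exact hqu i
    simp_rw [this]
    rw [Finset.sum_const_zero, mul_zero, sub_zero, hu, real_inner_comm, real_inner_add_sub_eq_zero_iff]
    rw [← dist_eq_norm, ← dist_eq_norm, hyv, hzv]
  have hli : LinearIndependent ℝ (Fin.cons u q : Fin (n + 1) → E) := by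
    rw [linearIndependent_finCons]
    refine ⟨dc_linInd n q hq, ?_⟩
    intro hmem
    apply hu0
    have : Submodule.span ℝ (Set.range q) ≤ (ℝ ∙ u)ᗮ := by
      rw [Submodule.span_le]
      rintro _ ⟨i, rfl⟩
      rw [SetLike.mem_coe, Submodule.mem_orthogonal_singleton_iff_inner_left]
      exact hqu i
    have h := this hmem
    rw [Submodule.mem_orthogonal_singleton_iff_inner_left] at h
    exact inner_self_eq_zero.1 h
  have htop := hli.span_eq_top_of_card_eq_finrank (by simp [hE])
  have hle : Submodule.span ℝ (Set.range (Fin.cons u q : Fin (n + 1) → E)) ≤ (ℝ ∙ x)ᗮ := by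
    rw [Submodule.span_le]
    rintro _ ⟨i, rfl⟩
    rw [SetLike.mem_coe, Submodule.mem_orthogonal_singleton_iff_inner_left]
    refine Fin.cases ?_ (fun i => ?_) i
    · exact hux
    · exact hqx i
  have hxm : x ∈ (ℝ ∙ x)ᗮ := hle (htop ▸ Submodule.mem_top)
  rw [Submodule.mem_orthogonal_singleton_iff_inner_left] at hxm
  have := inner_self_eq_zero.1 hxm
  rw [hx] at this
  exact sub_eq_zero.1 this

/-- No unit-distance realization of `K_n ∨ C_k` in dimension `n + 1`. -/
lemma dc_lower (n : ℕ) (hn : 2 ≤ n) (k : ℕ) (hk : 3 ≤ k)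
    (p : Fin n → EuclideanSpace ℝ (Fin (n + 1))) (v : ZMod k → EuclideanSpace ℝ (Fin (n + 1)))
    (hp : ∀ i j, i ≠ j → dist (p i) (p j) = 1) (hpv : ∀ i a, dist (p i) (v a) = 1)
    (hv : ∀ a, dist (v a) (v (a + 1)) = 1) (hinj : Function.Injective v) : False := by
  obtain ⟨w, hre, hw, him, hroot⟩ := dc_exists_w n hn
  have hn0 : (n : ℝ) ≠ 0 := by positivity
  set c : EuclideanSpace ℝ (Fin (n + 1)) := (1 / n : ℝ) • ∑ i, p i with hc
  have h2 : (2 : ZMod k) ≠ 0 := by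
    intro h
    have h' : ((2 : ℕ) : ZMod k) = 0 := by exact_mod_cast h
    rw [ZMod.natCast_eq_zero_iff] at h'
    exact absurd (Nat.le_of_dvd (by norm_num) h') (by omega)
  have hrec : ∀ a : ZMod k, v (a + 2) - c = (2 * w.re) • (v (a + 1) - c) - (v a - c) := by
    intro a
    have hne : v a ≠ v (a + 2) := by
      intro h
      exact h2 (by simpa using hinj h)
    have h12 : a + 1 + 1 = a + 2 := by ring
    have h := dc_recur n (by simp) p hp (v a) (v (a + 1)) (v (a + 2)) (hv a)
      (by rw [dist_comm, ← h12]; exact hv (a + 1)) hne (fun i => hpv i _) (fun i => hpv i _)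
      (fun i => hpv i _)
    have hsum : ∑ i, (p i - v (a + 1)) = (n : ℝ) • (c - v (a + 1)) := by
      rw [Finset.sum_sub_distrib, hc, smul_sub, smul_smul]
      simp [hn0, Nat.cast_smul_eq_nsmul]
    rw [hsum, smul_smul] at h
    have h3 : v (a + 2) = (2 / (n + 1) * n : ℝ) • (c - v (a + 1)) + v (a + 1) + v (a + 1) - v a := by
      rw [← h]; abel
    rw [h3, hre]
    ext t
    simp
    field_simp
    ring
  have hz : ∀ a, v a - c = 0 := by
    intro a
    ext t
    have := dc_seq_zero w hw him k (hroot k (by omega)) (fun j => (v (a + j) - c) t)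
      (fun j => by
        have := congrArg (fun x => x t) (hrec (a + j))
        simp only [PiLp.sub_apply, PiLp.smul_apply, smul_eq_mul] at this ⊢
        push_cast
        rw [← add_assoc, ← add_assoc]
        exact this) (by simp) (by simp)
    simpa using this
  have h01 : v 0 = v (0 + 1) := by
    rw [sub_eq_zero.1 (hz 0), sub_eq_zero.1 (hz (0 + 1))]
  have := hv 0
  rw [← h01, dist_self] at this
  exact zero_ne_one this

lemma dc_rep (n : ℕ) (hn : 2 ≤ n) (m : ℕ) {K : Type*} (a : K → ℝ) (b : K → Fin m → ℝ)
    (h : ∀ x, a x ^ 2 + ∑ t, b x t ^ 2 = (n + 1) / (2 * n : ℝ))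
    (hinj : ∀ x y, a x = a y → b x = b y → x = y) :
    ∃ f : Fin n ⊕ K → EuclideanSpace ℝ (Fin (n + m)), Function.Injective f ∧
      (∀ i j, i ≠ j → dist (f (.inl i)) (f (.inl j)) = 1) ∧
      (∀ i x, dist (f (.inl i)) (f (.inr x)) = 1) ∧
      (∀ x y, (a x - a y) ^ 2 + ∑ t, (b x t - b y t) ^ 2 = 1 →
        dist (f (.inr x)) (f (.inr y)) = 1) := by
  have hn' : (0 : ℝ) < n := by positivity
  set s : ℝ := Real.sqrt n with hs
  have hs0 : 0 < s := Real.sqrt_pos.2 hn'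
  have hss : s ^ 2 = n := Real.sq_sqrt hn'.le
  set d : ℝ := Real.sqrt 2 with hd
  have hd0 : 0 < d := Real.sqrt_pos.2 (by norm_num)
  have hdd : d ^ 2 = 2 := Real.sq_sqrt (by norm_num)
  let L := LinearIsometryEquiv.piLpCongrLeft 2 ℝ ℝ (finSumFinEquiv (m := n) (n := m))
  let g : Fin n ⊕ K → EuclideanSpace ℝ (Fin n ⊕ Fin m) := fun x => WithLp.toLp 2
    (match x with
    | .inl i => Sum.elim (fun j => if j = i then 1 / d else 0) (fun _ => 0)
    | .inr x => Sum.elim (fun _ => 1 / (n * d) + a x / s) (b x))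
  have hpp : ∀ i j, i ≠ j → dist (g (.inl i)) (g (.inl j)) = 1 := by
    intro i j hij
    rw [EuclideanSpace.dist_eq, Real.sqrt_eq_one, Fintype.sum_sum_type]
    simp only [g, Real.dist_eq, sq_abs, Sum.elim_inl, Sum.elim_inr]
    have e : ∀ t, ((if t = i then 1 / d else 0) - (if t = j then 1 / d else 0)) ^ 2
        = (if t = i then 1 / d ^ 2 else 0) + (if t = j then 1 / d ^ 2 else 0) := by
      intro t
      by_cases h1 : t = i
      · have h2 : t ≠ j := fun h => hij (h1 ▸ h)
        simp [h1, hij]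
      · by_cases h2 : t = j
        · simp [h2, hij.symm]
        · simp [h1, h2]
    simp_rw [e]
    rw [Finset.sum_add_distrib, Finset.sum_ite_eq', Finset.sum_ite_eq', hdd]
    norm_num
  have hpv : ∀ i x, dist (g (.inl i)) (g (.inr x)) = 1 := by
    intro i x
    rw [EuclideanSpace.dist_eq, Real.sqrt_eq_one, Fintype.sum_sum_type]
    simp only [g, Real.dist_eq, sq_abs, Sum.elim_inl, Sum.elim_inr]
    set α := 1 / (n * d) + a x / s with hα
    have e : ∀ t, ((if t = i then 1 / d else 0) - α) ^ 2
        = α ^ 2 + (if t = i then 1 / d ^ 2 - 2 * α / d else 0) := by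
      intro t
      split_ifs
      · ring
      · ring
    simp_rw [e]
    rw [Finset.sum_add_distrib, Finset.sum_ite_eq']
    simp only [Finset.sum_const, Finset.card_univ, Fintype.card_fin, Finset.mem_univ, if_true,
      nsmul_eq_mul, zero_sub, neg_sq]
    have hx : ∑ t, b x t ^ 2 = (n + 1) / (2 * n : ℝ) - a x ^ 2 := by rw [← h x]; ring
    rw [hx, hα, ← hss]
    field_simp
    linear_combination (1 - s ^ 2) * hdd
  have hvv : ∀ x y, dist (g (.inr x)) (g (.inr y)) =
      Real.sqrt ((a x - a y) ^ 2 + ∑ t, (b x t - b y t) ^ 2) := by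
    intro x y
    rw [EuclideanSpace.dist_eq, Fintype.sum_sum_type]
    simp only [g, Real.dist_eq, sq_abs, Sum.elim_inl, Sum.elim_inr]
    congr 2
    simp only [Finset.sum_const, Finset.card_univ, Fintype.card_fin, nsmul_eq_mul]
    rw [← hss]
    field_simp
    ring
  have ginj : Function.Injective g := by
    rintro (i | x) (j | y) hxy
    · by_contra hne
      have := hpp i j (fun h => hne (by rw [h]))
      rw [hxy, dist_self] at this
      exact zero_ne_one this
    · have := hpv i y
      rw [hxy, dist_self] at this
      exact absurd this zero_ne_one
    · have := hpv j x
      rw [hxy, dist_self] at this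
      exact absurd this zero_ne_one
    · have h0 := hvv x y
      rw [hxy, dist_self] at h0
      have hnn : 0 ≤ ∑ t, (b x t - b y t) ^ 2 := Finset.sum_nonneg fun t _ => sq_nonneg _
      have h1 := (Real.sqrt_eq_zero (by positivity)).1 h0.symm
      have h2 : (a x - a y) ^ 2 = 0 := by nlinarith [sq_nonneg (a x - a y)]
      have h3 : ∑ t, (b x t - b y t) ^ 2 = 0 := by nlinarith [sq_nonneg (a x - a y)]
      rw [Finset.sum_eq_zero_iff_of_nonneg (fun t _ => sq_nonneg _)] at h3
      congr 1
      apply hinj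
      · exact sub_eq_zero.1 (pow_eq_zero_iff (two_ne_zero)|>.1 h2)
      · funext t
        exact sub_eq_zero.1 (pow_eq_zero_iff (two_ne_zero)|>.1 (h3 t (Finset.mem_univ t)))
  refine ⟨fun x => L (g x), L.injective.comp ginj, ?_, ?_, ?_⟩
  · intro i j hij
    rw [L.dist_map]; exact hpp i j hij
  · intro i x
    rw [L.dist_map]; exact hpv i x
  · intro x y hxy
    rw [L.dist_map, hvv, hxy, Real.sqrt_one]

/-- conditions for a map to be a unit-distance map on the suspension of a relation `R` -/
lemma dc_path (n : ℕ) (hn : 2 ≤ n) (k : ℕ) (hk : 3 ≤ k) (a0 : ZMod k) :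
    ∃ f : Fin n ⊕ ZMod k → EuclideanSpace ℝ (Fin (n + 1)), Function.Injective f ∧
      (∀ i j, i ≠ j → dist (f (.inl i)) (f (.inl j)) = 1) ∧
      (∀ i x, dist (f (.inl i)) (f (.inr x)) = 1) ∧
      (∀ x, x ≠ a0 → dist (f (.inr x)) (f (.inr (x + 1))) = 1) := by
  obtain ⟨w, hre, hw, him, hroot⟩ := dc_exists_w n hn
  have : NeZero k := ⟨by omega⟩
  have hn' : (0 : ℝ) < n := by positivity
  set R : ℝ := (n + 1) / (2 * n : ℝ) with hR
  have hR0 : 0 < R := by positivity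
  set r := Real.sqrt R with hr
  have hr0 : 0 < r := Real.sqrt_pos.2 hR0
  have hrr : r ^ 2 = R := Real.sq_sqrt hR0.le
  have hpow : ∀ j : ℕ, (w ^ j).re ^ 2 + (w ^ j).im ^ 2 = 1 := by
    intro j
    induction j with
    | zero => simp
    | succ j ih =>
      rw [pow_succ w, Complex.mul_re, Complex.mul_im]
      linear_combination (w.re ^ 2 + w.im ^ 2) * ih + hw
  have hw0 : w ≠ 0 := fun h => him (by simp [h])
  have hpinj : ∀ i j : ℕ, w ^ i = w ^ j → i = j := by
    have aux : ∀ i j : ℕ, i < j → w ^ i ≠ w ^ j := by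
      intro i j hij h
      obtain ⟨d, rfl⟩ := Nat.exists_eq_add_of_lt hij
      rw [add_assoc, pow_add] at h
      exact hroot (d + 1) (by omega) ((mul_eq_left₀ (pow_ne_zero i hw0)).1 h.symm)
    intro i j h
    rcases lt_trichotomy i j with h1 | h1 | h1
    · exact absurd h (aux i j h1)
    · exact h1
    · exact absurd h.symm (aux j i h1)
  let e : ZMod k → ℕ := fun x => (x - (a0 + 1)).val
  obtain ⟨f, hf, h1, h2, h3⟩ := dc_rep n hn 1 (fun x : ZMod k => r * (w ^ e x).re)
    (fun x _ => r * (w ^ e x).im) (by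
      intro x
      simp only [Fin.sum_univ_one]
      linear_combination r ^ 2 * hpow (e x) + hrr) (by
      intro x y hx hy
      have hy := congrFun hy 0
      have h5 : w ^ e x = w ^ e y :=
        Complex.ext (mul_left_cancel₀ hr0.ne' hx) (mul_left_cancel₀ hr0.ne' hy)
      have := ZMod.val_injective k (hpinj _ _ h5)
      simpa using this)
  refine ⟨f, hf, h1, h2, fun x hx => h3 _ _ ?_⟩
  have he : e (x + 1) = e x + 1 := by
    have hlt : (x - (a0 + 1)).val + 1 < k := by
      have := ZMod.val_lt (x - (a0 + 1))
      by_contra hcon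
      have heq : (x - (a0 + 1)).val + 1 = k := by omega
      have h6 : (((x - (a0 + 1)).val + 1 : ℕ) : ZMod k) = 0 := by rw [heq]; simp
      push_cast at h6
      rw [ZMod.natCast_zmod_val] at h6
      exact hx (by linear_combination h6)
    have h1v : (1 : ZMod k).val = 1 := ZMod.val_one'' (by omega)
    have : x + 1 - (a0 + 1) = (x - (a0 + 1)) + 1 := by ring
    simp only [e]
    rw [this, ZMod.val_add_of_lt (by rw [h1v]; exact hlt), h1v]
  simp only [Fin.sum_univ_one, he, pow_succ, Complex.mul_re, Complex.mul_im]
  have hp := hpow (e x)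
  set A := (w ^ e x).re
  set B := (w ^ e x).im
  have : r ^ 2 * (2 - 2 * w.re) = 1 := by
    rw [hrr, hR, hre]
    field_simp
    ring
  linear_combination r ^ 2 * (2 - 2 * w.re) * hp + this + r ^ 2 * (A ^ 2 + B ^ 2) * hw

lemma dc_cycle (n : ℕ) (hn : 2 ≤ n) (c : ℕ) :
    ∃ f : Fin n ⊕ ZMod (2 * (c + 1) + 1) → EuclideanSpace ℝ (Fin (n + 2)), Function.Injective f ∧
      (∀ i j, i ≠ j → dist (f (.inl i)) (f (.inl j)) = 1) ∧
      (∀ i x, dist (f (.inl i)) (f (.inr x)) = 1) ∧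
      (∀ x, dist (f (.inr x)) (f (.inr (x + 1))) = 1) := by
  set k := 2 * (c + 1) + 1 with hkd
  have : NeZero k := ⟨by omega⟩
  have hn' : (0 : ℝ) < n := by positivity
  have hcop : (c + 1).Coprime k := by
    rw [hkd]; simp
  have hprim := Complex.isPrimitiveRoot_exp_of_coprime (c + 1) k (by omega) hcop
  set w := Complex.exp (2 * Real.pi * Complex.I * ((c + 1 : ℕ) / k)) with hwd
  have hw1 : w = Complex.exp (((2 * Real.pi * ((c + 1 : ℕ) / k) : ℝ) : ℂ) * Complex.I) := by
    rw [hwd]; congr 1; push_cast; ring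
  have hre : w.re ≤ 0 := by
    rw [hw1, Complex.exp_ofReal_mul_I_re]
    have hk0 : (0 : ℝ) < k := by positivity
    have hkr : (k : ℝ) = 2 * (c + 1) + 1 := by rw [hkd]; push_cast; ring
    have hc0 : (0 : ℝ) ≤ c := by positivity
    have hpi := Real.pi_pos
    have hA : 1 / 4 ≤ (((c + 1 : ℕ) : ℝ) / k) := by
      rw [le_div_iff₀ hk0, hkr]; push_cast; linarith
    have hB : (((c + 1 : ℕ) : ℝ) / k) ≤ 1 / 2 := by
      rw [div_le_iff₀ hk0, hkr]; push_cast; linarith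
    apply Real.cos_nonpos_of_pi_div_two_le_of_le
    · nlinarith
    · nlinarith
  have hw : w.re ^ 2 + w.im ^ 2 = 1 := by
    rw [hw1, Complex.exp_ofReal_mul_I_re, Complex.exp_ofReal_mul_I_im]
    exact Real.cos_sq_add_sin_sq _
  have hpow : ∀ j : ℕ, (w ^ j).re ^ 2 + (w ^ j).im ^ 2 = 1 := by
    intro j
    induction j with
    | zero => simp
    | succ j ih =>
      rw [pow_succ w, Complex.mul_re, Complex.mul_im]
      linear_combination (w.re ^ 2 + w.im ^ 2) * ih + hw
  set R : ℝ := 1 / (2 - 2 * w.re) with hR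
  have hden : 0 < 2 - 2 * w.re := by linarith
  have hR0 : 0 < R := by positivity
  have hR1 : R ≤ 1 / 2 := by
    rw [hR]; apply one_div_le_one_div_of_le <;> linarith
  set r := Real.sqrt R with hr
  have hr0 : 0 < r := Real.sqrt_pos.2 hR0
  have hrr : r ^ 2 = R := Real.sq_sqrt hR0.le
  have hZ : 0 ≤ (n + 1) / (2 * n : ℝ) - R := by
    have : (1 : ℝ) / 2 ≤ (n + 1) / (2 * n : ℝ) := by
      rw [div_le_div_iff₀ (by norm_num) (by positivity)]; linarith
    linarith
  obtain ⟨f, hf, h1, h2, h3⟩ := dc_rep n hn 2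
    (fun _ : ZMod k => Real.sqrt ((n + 1) / (2 * n : ℝ) - R))
    (fun x => ![r * (w ^ x.val).re, r * (w ^ x.val).im]) (by
      intro x
      simp only [Fin.sum_univ_two, Matrix.cons_val_zero, Matrix.cons_val_one]
      rw [Real.sq_sqrt hZ]
      linear_combination r ^ 2 * hpow (x.val) + hrr) (by
      intro x y _ hy
      have hy0 := congrFun hy 0
      have hy1 := congrFun hy 1
      simp only [Matrix.cons_val_zero, Matrix.cons_val_one] at hy0 hy1
      have h5 : w ^ x.val = w ^ y.val :=
        Complex.ext (mul_left_cancel₀ hr0.ne' hy0) (mul_left_cancel₀ hr0.ne' hy1)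
      exact ZMod.val_injective k (hprim.pow_inj (ZMod.val_lt x) (ZMod.val_lt y) h5))
  refine ⟨f, hf, h1, h2, fun x => h3 _ _ ?_⟩
  have he : w ^ (x + 1).val = w ^ x.val * w := by
    rw [← pow_succ, ZMod.val_add, ZMod.val_one'' (by omega)]
    exact (pow_eq_pow_mod _ hprim.pow_eq_one).symm
  simp only [Fin.sum_univ_two, Matrix.cons_val_zero, Matrix.cons_val_one, he,
    Complex.mul_re, Complex.mul_im]
  have hp := hpow x.val
  set A := (w ^ x.val).re
  set B := (w ^ x.val).im
  have : r ^ 2 * (2 - 2 * w.re) = 1 := by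
    rw [hrr, hR]
    exact one_div_mul_cancel hden.ne'
  linear_combination r ^ 2 * (2 - 2 * w.re) * hp + this + r ^ 2 * (A ^ 2 + B ^ 2) * hw

/-- The join of `K_n` with the cycle `C_k`. -/
def dcGraph (n k : ℕ) : SimpleGraph (Fin n ⊕ ZMod k) :=
  SimpleGraph.fromRel fun x y =>
    match x, y with
    | .inl _, .inl _ => True
    | .inl _, .inr _ => True
    | .inr _, .inl _ => True
    | .inr a, .inr b => b = a + 1

lemma dcGraph_adj (n k : ℕ) (D : Fin n ⊕ ZMod k → Fin n ⊕ ZMod k → Prop)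
    (hsymm : ∀ u v, D u v → D v u)
    (h1 : ∀ i j, i ≠ j → D (.inl i) (.inl j)) (h2 : ∀ i x, D (.inl i) (.inr x))
    (h3 : ∀ x, D (.inr x) (.inr (x + 1))) {u v} (h : (dcGraph n k).Adj u v) : D u v := by
  rw [dcGraph, SimpleGraph.fromRel_adj] at h
  obtain ⟨hne, h⟩ := h
  rcases u with i | x <;> rcases v with j | y
  · exact h1 i j fun h => hne (by rw [h])
  · exact h2 i y
  · exact hsymm _ _ (h2 j x)
  · simp only at h
    rcases h with h | h
    · rw [h]; exact h3 x
    · rw [h]; exact hsymm _ _ (h3 y)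

/-- unit-distance representability of a subgraph, phrased with maps on the ambient vertex type -/
def dcQ {V : Type} {G : SimpleGraph V} (H : G.Subgraph) (N : ℕ) : Prop :=
  ∃ f : V → EuclideanSpace ℝ (Fin N), Set.InjOn f H.verts ∧ ∀ u v, H.Adj u v → dist (f u) (f v) = 1

lemma dcQ_mono {V : Type} {G : SimpleGraph V} {H H' : G.Subgraph} (hle : H ≤ H') {N : ℕ}
    (h : dcQ H' N) : dcQ H N := by
  obtain ⟨f, h1, h2⟩ := h
  exact ⟨f, h1.mono hle.1, fun u v huv => h2 u v (hle.2 huv)⟩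

lemma dcQ_iff {V : Type} {G : SimpleGraph V} (H : G.Subgraph) (N : ℕ) :
    dcQ H N ↔ H.coe.HasUnitDistRep N := by
  classical
  constructor
  · rintro ⟨f, h1, h2⟩
    exact ⟨fun x => f x, fun x y hxy => Subtype.ext (h1 x.2 y.2 hxy), fun u v huv => h2 _ _ huv⟩
  · rintro ⟨f, h1, h2⟩
    refine ⟨fun x => if h : x ∈ H.verts then f ⟨x, h⟩ else 0, ?_, ?_⟩
    · intro x hx y hy hxy
      simp only [hx, hy, dif_pos] at hxy
      exact congrArg Subtype.val (h1 hxy)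
    · intro u v huv
      simp only [H.edge_vert huv, H.edge_vert huv.symm, dif_pos]
      exact h2 huv

lemma dc_rep_mono {V : Type} (G : SimpleGraph V) {m N : ℕ} (hmN : m ≤ N)
    (h : G.HasUnitDistRep m) : G.HasUnitDistRep N := by
  obtain ⟨d, rfl⟩ := Nat.exists_eq_add_of_le hmN
  obtain ⟨f, h1, h2⟩ := h
  let L := LinearIsometryEquiv.piLpCongrLeft 2 ℝ ℝ (finSumFinEquiv (m := m) (n := d))
  let g : V → EuclideanSpace ℝ (Fin m ⊕ Fin d) := fun x =>
    WithLp.toLp 2 (Sum.elim (f x) (fun _ => 0))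
  have hg : ∀ x y, dist (g x) (g y) = dist (f x) (f y) := by
    intro x y
    rw [EuclideanSpace.dist_eq, EuclideanSpace.dist_eq, Fintype.sum_sum_type]
    simp [g]
  refine ⟨fun x => L (g x), ?_, ?_⟩
  · intro x y hxy
    apply h1
    rw [← dist_eq_zero, ← hg, L.injective hxy, dist_self]
  · intro u v huv
    rw [L.dist_map, hg]; exact h2 huv

/-- A minimal non-representable subgraph is connected. -/
lemma dc_conn {V : Type} [Finite V] {G : SimpleGraph V} (H : G.Subgraph) (N : ℕ)
    (hH : ¬ dcQ H (N + 1)) (hmin : ∀ H' : G.Subgraph, H' < H → dcQ H' (N + 1)) :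
    H.coe.Connected := by
  classical
  have hne : Nonempty H.verts := by
    by_contra hcon
    rw [not_nonempty_iff, Set.isEmpty_coe_sort] at hcon
    refine hH ⟨fun _ => 0, by simp [hcon], fun u v huv => ?_⟩
    have := H.edge_vert huv
    simp [hcon] at this
  refine ⟨?_⟩
  intro u v
  by_contra hcon
  let A : Set V := {x | ∃ h : x ∈ H.verts, H.coe.Reachable u ⟨x, h⟩}
  have hAH : A ⊆ H.verts := fun x hx => hx.1
  have huA : (u : V) ∈ A := ⟨u.2, SimpleGraph.Reachable.refl _⟩
  have hvA : (v : V) ∉ A := fun h => hcon h.2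
  have hcl : ∀ x y, H.Adj x y → x ∈ A → y ∈ A := by
    rintro x y hxy ⟨hx, hr⟩
    refine ⟨H.edge_vert hxy.symm, hr.trans (SimpleGraph.Adj.reachable ?_)⟩
    exact hxy
  have hle : ∀ S : Set V, S ⊆ H.verts → H.induce S ≤ H := by
    intro S hS
    exact ⟨hS, fun x y hxy => hxy.2.2⟩
  have q1 := hmin (H.induce A) (lt_of_le_of_ne (hle A hAH) (by
    intro h
    exact hvA (by
      have : (v : V) ∈ (H.induce A).verts := by rw [h]; exact v.2
      exact this)))
  have q2 := hmin (H.induce (H.verts \ A)) (lt_of_le_of_ne (hle _ Set.sdiff_subset) (by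
    intro h
    have : (u : V) ∈ (H.induce (H.verts \ A)).verts := by rw [h]; exact u.2
    exact this.2 huA))
  obtain ⟨f, f1, f2⟩ := q1
  obtain ⟨g, g1, g2⟩ := q2
  have hfin : (Set.range fun xy : V × V => f xy.1 - g xy.2).Finite := Set.finite_range _
  obtain ⟨t, ht⟩ := hfin.exists_notMem
  have ht' : ∀ x y, f x ≠ g y + t := by
    intro x y h
    exact ht ⟨(x, y), by simp [h]⟩
  refine hH ⟨fun x => if x ∈ A then f x else g x + t, ?_, ?_⟩
  · intro x hx y hy hxy
    by_cases hxA : x ∈ A <;> by_cases hyA : y ∈ A <;> simp only [hxA, hyA, if_true, if_false] at hxy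
    · exact f1 hxA hyA hxy
    · exact absurd hxy (ht' _ _)
    · exact absurd hxy.symm (ht' _ _)
    · exact g1 ⟨hx, hxA⟩ ⟨hy, hyA⟩ (add_right_cancel hxy)
  · intro x y hxy
    by_cases hxA : x ∈ A
    · have hyA := hcl x y hxy hxA
      simp only [hxA, hyA, if_true]
      exact f2 x y ⟨hxA, hyA, hxy⟩
    · have hyA : y ∉ A := fun h => hxA (hcl y x hxy.symm h)
      simp only [hxA, hyA, if_false, dist_add_right]
      exact g2 x y ⟨⟨H.edge_vert hxy, hxA⟩, ⟨H.edge_vert hxy.symm, hyA⟩, hxy⟩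

theorem exists_large_dimCritical (n : ℕ) (hn : 2 ≤ n) (c : ℕ) (hc : 1 ≤ c) :
    ∃ (V : Type) (_ : Fintype V) (H : SimpleGraph V),
      H.Connected ∧ H.IsDimCritical ∧ H.udim = n + 2 ∧ c < Nat.card H.edgeSet := by
  classical
  obtain ⟨F, F1, F2, F3, F4⟩ := dc_cycle n hn c
  have hpath := dc_path n hn (2 * (c + 1) + 1) (by omega)
  have hlow := dc_lower n hn (2 * (c + 1) + 1) (by omega)
  have hk3 : 3 ≤ 2 * (c + 1) + 1 := by omega
  have hkc : c < 2 * (c + 1) + 1 := by omega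
  generalize 2 * (c + 1) + 1 = k at *
  have : NeZero k := ⟨by omega⟩
  have h2 : (2 : ZMod k) ≠ 0 := by
    intro h
    have h' : ((2 : ℕ) : ZMod k) = 0 := by exact_mod_cast h
    rw [ZMod.natCast_eq_zero_iff] at h'
    exact absurd (Nat.le_of_dvd (by norm_num) h') (by omega)
  have h1 : (1 : ZMod k) ≠ 0 := by
    intro h
    exact h2 (by linear_combination 2 * h)
  set G := dcGraph n k with hG
  have htop : ¬ dcQ (⊤ : G.Subgraph) (n + 1) := by
    rintro ⟨f, f1, f2⟩
    have finj : Function.Injective f := fun x y h => f1 trivial trivial h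
    refine hlow (fun i => f (.inl i)) (fun x => f (.inr x)) ?_ ?_ ?_ ?_
    · intro i j hij
      apply f2
      simp [hG, dcGraph, hij]
    · intro i x
      apply f2
      simp [hG, dcGraph]
    · intro x
      apply f2
      simp [hG, dcGraph, h1]
    · intro x y h
      exact Sum.inr_injective (finj h)
  obtain ⟨H, hHm⟩ := (Set.toFinite {H : G.Subgraph | ¬ dcQ H (n + 1)}).exists_minimal ⟨⊤, htop⟩
  have hH : ¬ dcQ H (n + 1) := hHm.1
  have hmin : ∀ H' : G.Subgraph, H' < H → dcQ H' (n + 1) := by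
    intro H' hlt
    by_contra hcon
    exact hlt.not_ge (hHm.2 hcon hlt.le)
  have hedge : ∀ x : ZMod k, H.Adj (.inr x) (.inr (x + 1)) := by
    intro x
    by_contra hcon
    obtain ⟨f, f1, f2, f3, f4⟩ := hpath x
    refine hH ⟨f, f1.injOn, fun u v huv => ?_⟩
    have key := dcGraph_adj n k (fun u v => H.Adj u v → dist (f u) (f v) = 1)
      (fun u v h h' => by rw [dist_comm]; exact h h'.symm)
      (fun i j hij _ => f2 i j hij) (fun i y _ => f3 i y)
      (fun y hy => by
        by_cases hyx : y = x
        · subst hyx; exact absurd hy hcon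
        · exact f4 y hyx) (H.adj_sub huv)
    exact key huv
  have hrep : H.coe.HasUnitDistRep (n + 2) := by
    rw [← dcQ_iff]
    refine ⟨F, F1.injOn, fun u v huv => ?_⟩
    exact dcGraph_adj n k (fun u v => dist (F u) (F v) = 1)
      (fun u v h => by rw [dist_comm]; exact h) F2 F3 F4 (H.adj_sub huv)
  have hudim : H.coe.udim = n + 2 := by
    apply le_antisymm
    · exact Nat.sInf_le hrep
    · refine le_csInf ⟨_, hrep⟩ ?_
      intro m hm
      by_contra hlt
      exact hH ((dcQ_iff H _).2 (dc_rep_mono _ (by omega) hm))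
  refine ⟨H.verts, Fintype.ofFinite _, H.coe, dc_conn H n hH hmin, ?_, hudim, ?_⟩
  · intro e he
    rw [hudim]
    suffices h : (H.coe.deleteEdges {e}).HasUnitDistRep (n + 1) from
      lt_of_le_of_lt (Nat.sInf_le h) (by omega)
    have hlt : H.deleteEdges (Sym2.map (↑) '' {e}) < H := by
      refine lt_of_le_of_ne (SimpleGraph.Subgraph.deleteEdges_le _) ?_
      intro heq
      induction e using Sym2.ind with
      | _ a b =>
        have hab : H.Adj a b := he
        have hab2 := heq.ge.2 hab
        rw [SimpleGraph.Subgraph.deleteEdges_adj] at hab2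
        exact hab2.2 (by simp)
    obtain ⟨f, f1, f2⟩ := hmin _ hlt
    refine ⟨fun x => f x, fun x y hxy => Subtype.ext (f1 x.2 y.2 hxy), fun u v huv => f2 _ _ ?_⟩
    rw [SimpleGraph.Subgraph.deleteEdges_coe_eq] at huv
    exact huv
  · let φ : ZMod k → H.coe.edgeSet := fun x =>
      ⟨s(⟨.inr x, H.edge_vert (hedge x)⟩, ⟨.inr (x + 1), H.edge_vert (hedge x).symm⟩), hedge x⟩
    have hφ : Function.Injective φ := by
      intro x y hxy
      have := congrArg Subtype.val hxy
      simp only [φ, Sym2.eq_iff, Subtype.mk.injEq, Sum.inr.injEq] at this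
      rcases this with h | h
      · exact h.1
      · exfalso
        exact h2 (by linear_combination h.2 - h.1)
    have := Nat.card_le_card_of_injective φ hφ
    rw [Nat.card_zmod] at this
    omega
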